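/- Let R be a finite group, and consider the natural action of Aut(R) on the set of subgroups of R (an automorphism α sends a subgroup H to its image α(H)). There exists a subgroup H of R whose stabilizer in Aut(R) under this action equals the kernel of the action (that is, the induced permutation group has a regular orbit) if and only if R is cyclic. -/

import Mathlib

/-!
Conjugation by an element of the normalizer of a regular point `H` fixes `H`, hence every subgroup,
so `H` and its centralizer lie in the Baer norm. For `k` in the norm, `⁅k, y⁆` lies in `⟨y⟩` and,
being also `⁅k, y * k⁆`, in `⟨y * k⟩`; it therefore commutes with `k` and `y`. This makes elements
of coprime order commute, so the group is nilpotent, and its Sylow subgroups inherit regular points.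

In a `p`-group, place `H` in a subgroup `M` of index `p`. If `y ∉ M` and `z` is central in `M` with
`(y * z) ^ p = y ^ p`, then `m ↦ m` on `M` and `y ↦ y * z` define an automorphism fixing `H`, which
forces `z ∈ ⟨y⟩`. Applied to `M`, and then to centralizers of suitable elements, this shows that a
noncyclic group of this kind has only one subgroup of order `p`, and it is central. If the norm lies
in `⟨y⟩` for every `y ∉ M`, the group is cyclic. Otherwise some `y ∉ M` and some `k` in the norm
generate a quaternion group of order eight; `k` can be chosen to centralize `H`, which makes it
central, a contradiction.
-/

open Subgroup
open scoped commutatorElement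

section Commutator

variable {G : Type*} [Group G] {a b : G}

theorem commutatorElement_pow_right (h : Commute ⁅a, b⁆ b) (n : ℕ) : ⁅a, b ^ n⁆ = ⁅a, b⁆ ^ n := by
  have hconj : a * b * a⁻¹ = ⁅a, b⁆ * b := by rw [commutatorElement_def]; group
  rw [commutatorElement_def, ← conj_pow, hconj, h.mul_pow, mul_inv_cancel_right]

theorem commutatorElement_pow_left (h : Commute ⁅a, b⁆ a) (n : ℕ) : ⁅a ^ n, b⁆ = ⁅a, b⁆ ^ n := by
  rw [← commutatorElement_inv, ← commutatorElement_inv b a, inv_pow,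
    commutatorElement_pow_right (by simpa only [← commutatorElement_inv a b] using h.inv_left)]

theorem mul_pow_eq_of_commute_commutatorElement (ha : Commute ⁅a, b⁆ a) (hb : Commute ⁅a, b⁆ b)
    (n : ℕ) : (b * a) ^ n = b ^ n * a ^ n * ⁅a, b⁆ ^ n.choose 2 := by
  induction n with
  | zero => simp
  | succ n ih =>
    have hswap : a ^ n * b = ⁅a, b⁆ ^ n * (b * a ^ n) := by
      rw [← commutatorElement_pow_left ha, commutatorElement_def]
      group
    calc (b * a) ^ (n + 1) = b ^ n * a ^ n * ⁅a, b⁆ ^ n.choose 2 * (b * a) := by rw [pow_succ, ih]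
      _ = b ^ n * (a ^ n * b) * a * ⁅a, b⁆ ^ n.choose 2 := by
        simp only [mul_assoc, ((hb.mul_right ha).pow_left _).eq]
      _ = b ^ (n + 1) * a ^ (n + 1) * ⁅a, b⁆ ^ n * ⁅a, b⁆ ^ n.choose 2 := by
        rw [hswap, ((hb.pow_left n).mul_right ((ha.pow_pow n n))).eq]
        simp only [pow_succ, mul_assoc, (ha.pow_left n).eq]
      _ = b ^ (n + 1) * a ^ (n + 1) * ⁅a, b⁆ ^ (n + 1).choose 2 := by
        rw [mul_assoc _ (⁅a, b⁆ ^ n), ← pow_add, Nat.choose_succ_succ' n 1, Nat.choose_one_right]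

theorem commutatorElement_mul_right_of_mem_center (h : ⁅a, b⁆ ∈ center G) (x : G) :
    ⁅a, x * b⁆ = ⁅a, x⁆ * ⁅a, b⁆ := by
  rw [← mul_inv_cancel_right ⁅a, b⁆ x, ← mem_center_iff.mp h x]
  simp only [commutatorElement_def]
  group

theorem commutatorElement_mul_left_of_mem_center (h : ⁅a, b⁆ ∈ center G) (x : G) :
    ⁅x * a, b⁆ = ⁅a, b⁆ * ⁅x, b⁆ := by
  rw [← mul_inv_cancel_right ⁅a, b⁆ x, ← mem_center_iff.mp h x]
  simp only [commutatorElement_def]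
  group

end Commutator

section Coprime

variable {G : Type*} [Group G] {x : G} {m n : ℕ}

theorem mem_of_pow_mem_of_coprime {S : Subgroup G} (hm : x ^ m ∈ S) (hn : x ^ n ∈ S)
    (hmn : m.Coprime n) : x ∈ S := by
  obtain ⟨a, b, hab⟩ := Nat.isCoprime_iff_coprime.mpr hmn
  rw [← zpow_one x, ← hab, zpow_add, mul_comm a, mul_comm b, zpow_mul, zpow_mul, zpow_natCast,
    zpow_natCast]
  exact mul_mem (zpow_mem hm a) (zpow_mem hn b)

theorem eq_one_of_pow_eq_one_of_coprime (hm : x ^ m = 1) (hn : x ^ n = 1)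
    (hmn : m.Coprime n) : x = 1 :=
  mem_bot.mp (mem_of_pow_mem_of_coprime hm hn hmn)

end Coprime

section BaerNorm

variable {G : Type*} [Group G] {k x y z : G}

/-- The Baer norm of `G`: the elements normalizing every subgroup of `G`. -/
def baerNorm (G : Type*) [Group G] : Subgroup G :=
  ⨅ L : Subgroup G, normalizer (L : Set G)

namespace baerNorm

theorem mem_iff : k ∈ baerNorm G ↔ ∀ L : Subgroup G, k ∈ normalizer (L : Set G) :=
  mem_iInf

theorem commutatorElement_mem_zpowers (hk : k ∈ baerNorm G) (y : G) :
    ⁅k, y⁆ ∈ zpowers y :=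
  mul_mem ((mem_normalizer_iff.mp (mem_iff.mp hk _) y).mp (mem_zpowers y))
    (inv_mem (mem_zpowers y))

theorem commute_commutatorElement_right (hk : k ∈ baerNorm G) (y : G) : Commute ⁅k, y⁆ y := by
  obtain ⟨n, hn⟩ := commutatorElement_mem_zpowers hk y
  exact hn ▸ (Commute.refl y).zpow_left n

-- `⁅k, y⁆ = ⁅k, y * k⁆` also lies in `zpowers (y * k)`.
theorem commute_commutatorElement_left (hk : k ∈ baerNorm G) (y : G) : Commute ⁅k, y⁆ k := by
  have h := commute_commutatorElement_right hk (y * k)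
  have heq : ⁅k, y * k⁆ = ⁅k, y⁆ := by simp only [commutatorElement_def]; group
  rw [heq] at h
  simpa using (commute_commutatorElement_right hk y).inv_right.mul_right h

protected theorem commutatorElement_pow_right (hk : k ∈ baerNorm G) (y : G) (n : ℕ) :
    ⁅k, y ^ n⁆ = ⁅k, y⁆ ^ n :=
  commutatorElement_pow_right (commute_commutatorElement_right hk y) n

protected theorem commutatorElement_pow_left (hk : k ∈ baerNorm G) (y : G) (n : ℕ) :
    ⁅k ^ n, y⁆ = ⁅k, y⁆ ^ n :=
  commutatorElement_pow_left (commute_commutatorElement_left hk y) n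

protected theorem mul_pow (hk : k ∈ baerNorm G) (y : G) (n : ℕ) :
    (y * k) ^ n = y ^ n * k ^ n * ⁅k, y⁆ ^ n.choose 2 :=
  mul_pow_eq_of_commute_commutatorElement (commute_commutatorElement_left hk y)
    (commute_commutatorElement_right hk y) n

theorem commute_of_coprime {m n : ℕ} (hk : k ∈ baerNorm G) (hkm : k ^ m = 1) (hxn : x ^ n = 1)
    (hmn : m.Coprime n) : Commute k x := by
  rw [← commutatorElement_eq_one_iff_commute]
  refine eq_one_of_pow_eq_one_of_coprime ?_ ?_ hmn
  · rw [← baerNorm.commutatorElement_pow_left hk, hkm, commutatorElement_one_left]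
  · rw [← baerNorm.commutatorElement_pow_right hk, hxn, commutatorElement_one_right]

theorem pow_mul_self_eq_one {n : ℕ} (hz : z ∈ baerNorm G) (hx : x ^ n = 1)
    (hxz : (x * z) ^ n = 1) : z ^ (n * n) = 1 := by
  have hw : ⁅z, x⁆ ^ n = 1 := by
    rw [← baerNorm.commutatorElement_pow_right hz, hx, commutatorElement_one_right]
  rw [baerNorm.mul_pow hz, hx, one_mul] at hxz
  rw [pow_mul, eq_inv_of_mul_eq_one_left hxz, inv_pow, pow_right_comm, hw, one_pow, inv_one]

theorem commute_of_mem_zpowers [Finite G] {p m : ℕ} (hp : p.Prime) (hk : k ∈ baerNorm G)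
    (hy : p ^ (2 * m - 1) ∣ orderOf y) (hz : z ∈ zpowers y) (hzm : z ^ p ^ m = 1) :
    Commute k z := by
  obtain ⟨j, hj⟩ := mem_powers_iff_mem_zpowers.mpr (commutatorElement_mem_zpowers hk y)
  obtain ⟨n, rfl⟩ := mem_powers_iff_mem_zpowers.mpr hz
  dsimp only at hj hzm ⊢
  have hjj : y ^ (j * j) = 1 := by
    have hcomm : ⁅k, y ^ j⁆ = 1 := by
      rw [hj, commutatorElement_eq_one_iff_commute]
      exact (commute_commutatorElement_left hk y).symm
    rw [pow_mul, hj, ← baerNorm.commutatorElement_pow_right hk, hcomm]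
  have hdvd : p ^ m ∣ j := by
    rcases eq_or_ne j 0 with rfl | hj0
    · exact dvd_zero _
    have h := (hp.pow_dvd_iff_le_factorization (mul_ne_zero hj0 hj0)).mp
      (hy.trans (orderOf_dvd_of_pow_eq_one hjj))
    rw [Nat.factorization_mul hj0 hj0, Finsupp.add_apply] at h
    exact (hp.pow_dvd_iff_le_factorization hj0).mpr (by lia)
  obtain ⟨i, rfl⟩ := hdvd
  rw [← commutatorElement_eq_one_iff_commute, baerNorm.commutatorElement_pow_right hk, ← hj,
    pow_right_comm, pow_mul, hzm, one_pow]

theorem commute_of_pow_prime_eq_one [Finite G] {p : ℕ} (hp : p.Prime) (hk : k ∈ baerNorm G)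
    (hx : x ^ p = 1) : Commute k x := by
  have := Fact.mk hp
  by_cases hx1 : x = 1
  · exact hx1 ▸ Commute.one_right k
  · exact commute_of_mem_zpowers hp hk (m := 1) (y := x)
      (by simp [orderOf_eq_prime hx hx1]) (mem_zpowers x) (by simpa using hx)

theorem commute_commutatorElement_of_coprime [Finite G] {p m n : ℕ} (hp : p.Prime)
    (hk : k ∈ baerNorm G) (hx : x ^ p ^ m = 1) (hy : y ^ n = 1) (hpn : p.Coprime n) :
    Commute k ⁅x, y⁆ := by
  obtain ⟨e, r, hr, her⟩ := Nat.exists_eq_pow_mul_and_not_dvd (orderOf_pos k).ne' p hp.ne_one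
  have hpr : p.Coprime r := hp.coprime_iff_not_dvd.mpr hr
  have hkr : (k ^ p ^ e) ^ r = 1 := by rw [← pow_mul, ← her, pow_orderOf_eq_one]
  have hkp : (k ^ r) ^ p ^ e = 1 := by rw [pow_right_comm, hkr]
  have hcomm_x {g : G} (hg : g ^ p ^ m = 1) : Commute (k ^ p ^ e) g :=
    commute_of_coprime (pow_mem hk _) hkr hg (hpr.symm.pow_right m)
  have hcomm_y {g : G} (hg : g ^ n = 1) : Commute (k ^ r) g :=
    commute_of_coprime (pow_mem hk _) hkp hg (hpn.pow_left e)
  have hpow : k ^ p ^ e ∈ centralizer {⁅x, y⁆} := by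
    rw [mem_centralizer_singleton_iff, commutatorElement_def, mul_assoc, mul_assoc,
      ← mul_assoc y]
    exact (hcomm_x hx).mul_right (hcomm_x (by simp [conj_pow, hx]))
  have hpow' : k ^ r ∈ centralizer {⁅x, y⁆} := by
    rw [mem_centralizer_singleton_iff, commutatorElement_def]
    exact (hcomm_y (by simp [conj_pow, hy])).mul_right (hcomm_y (by simp [hy]))
  exact mem_centralizer_singleton_iff.mp <|
    mem_of_pow_mem_of_coprime hpow hpow' (hpr.pow_left e)

end baerNorm
end BaerNorm

theorem map_eq_self_of_forall_mem {G : Type*} [Group G] [Finite G] {α : MulAut G} {L : Subgroup G}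
    (h : ∀ x ∈ L, α x ∈ L) : L.map α.toMonoidHom = L :=
  eq_of_le_of_card_ge (map_le_iff_le_comap.mpr h) (card_map_of_injective α.injective).ge

theorem mulSingle_mem_zpowers {ι : Type*} [DecidableEq ι] [Finite ι] {A : ι → Type*}
    [∀ i, Group (A i)] (hA : Pairwise fun i j => (Nat.card (A i)).Coprime (Nat.card (A j)))
    (x : ∀ i, A i) (i : ι) : Pi.mulSingle i (x i) ∈ zpowers x := by
  have := Fintype.ofFinite ι
  have hN : (Nat.card (A i)).Coprime (∏ j ∈ Finset.univ.erase i, Nat.card (A j)) :=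
    Nat.Coprime.prod_right fun j hj => hA (Finset.ne_of_mem_erase hj).symm
  obtain ⟨n, hn1, hn0⟩ := Nat.chineseRemainder hN 1 0
  refine mem_zpowers_iff.mpr ⟨n, funext fun j => ?_⟩
  rw [zpow_natCast, Pi.pow_apply]
  by_cases hj : j = i
  · subst hj
    rw [Pi.mulSingle_eq_same, ← pow_one (x j), ← pow_mul, one_mul, pow_eq_pow_iff_modEq]
    exact hn1.of_dvd (_root_.orderOf_dvd_natCard _)
  · rw [Pi.mulSingle_eq_of_ne hj, ← orderOf_dvd_iff_pow_eq_one]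
    have hdvd : Nat.card (A j) ∣ ∏ k ∈ Finset.univ.erase i, Nat.card (A k) :=
      Finset.dvd_prod_of_mem _ (by simpa using hj)
    exact (_root_.orderOf_dvd_natCard _).trans (hdvd.trans (Nat.modEq_zero_iff_dvd.mp hn0))

/-- `H` is a regular point for the action of `MulAut G` on `Subgroup G`: an automorphism fixing
`H` fixes every subgroup. -/
def IsRegularPoint {G : Type*} [Group G] (H : Subgroup G) : Prop :=
  ∀ α : MulAut G, H.map α.toMonoidHom = H → ∀ L : Subgroup G, L.map α.toMonoidHom = L

namespace IsRegularPoint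

variable {G G' : Type*} [Group G] [Group G'] {H : Subgroup G}

theorem of_top (h : IsRegularPoint (⊤ : Subgroup G)) (L : Subgroup G) : IsRegularPoint L :=
  fun α _ => h α (map_top_of_surjective _ α.surjective)

theorem normalizer_le_baerNorm (hH : IsRegularPoint H) :
    normalizer (H : Set G) ≤ baerNorm G := fun _ hg =>
  baerNorm.mem_iff.mpr fun L =>
    mem_normalizer_iff_map_conj_eq.mpr (hH _ (mem_normalizer_iff_map_conj_eq.mp hg) L)

theorem le_baerNorm (hH : IsRegularPoint H) : H ≤ baerNorm G :=
  le_normalizer.trans hH.normalizer_le_baerNorm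

theorem centralizer_le_baerNorm (hH : IsRegularPoint H) :
    centralizer (H : Set G) ≤ baerNorm G :=
  (centralizer_le_normalizer _).trans hH.normalizer_le_baerNorm

theorem commute_of_coprime [Finite G] (hH : IsRegularPoint H) {p m n : ℕ} [hp : Fact p.Prime]
    {x y : G} (hx : x ^ p ^ m = 1) (hy : y ^ n = 1) (hpn : p.Coprime n) : Commute x y := by
  have hpn' : (p ^ m).Coprime n := hpn.pow_left m
  have hz : ⁅x, y⁆ ∈ baerNorm G := hH.centralizer_le_baerNorm fun h hh =>
    baerNorm.commute_commutatorElement_of_coprime hp.out (hH.le_baerNorm hh) hx hy hpn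
  have hzx : ⁅x, y⁆ ^ (p ^ m * p ^ m) = 1 := by
    refine baerNorm.pow_mul_self_eq_one hz (x := x⁻¹) (by simp [hx]) ?_
    rw [show x⁻¹ * ⁅x, y⁆ = y * x⁻¹ * y⁻¹ by rw [commutatorElement_def]; group]
    simp [conj_pow, hx]
  have hzy : ⁅x, y⁆ ^ (n * n) = 1 := by
    refine baerNorm.pow_mul_self_eq_one hz hy ?_
    rw [show y * ⁅x, y⁆ = y * x * y * (y * x)⁻¹ by rw [commutatorElement_def]; group, conj_pow, hy,
      mul_one, mul_inv_cancel]
  exact commutatorElement_eq_one_iff_commute.mp <| eq_one_of_pow_eq_one_of_coprime hzx hzy <|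
    (hpn'.mul_left hpn').mul_right (hpn'.mul_left hpn')

theorem sylow_le_centralizer [Finite G] (hH : IsRegularPoint H) {p q : ℕ} [Fact p.Prime]
    [hq : Fact q.Prime] (hpq : p ≠ q) (P : Sylow p G) (Q : Sylow q G) :
    (Q : Subgroup G) ≤ centralizer (P : Set G) := fun y hy x hx => by
  obtain ⟨m, hm⟩ := isPGroup_iff_pow_pow_eq_one.mp P.isPGroup' ⟨x, hx⟩
  obtain ⟨n, hn⟩ := isPGroup_iff_pow_pow_eq_one.mp Q.isPGroup' ⟨y, hy⟩
  exact hH.commute_of_coprime (Subtype.ext_iff.mp hm) (Subtype.ext_iff.mp hn)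
    (((Nat.coprime_primes Fact.out hq.out).mpr hpq).pow_right n)

theorem sylow_normal [Finite G] (hH : IsRegularPoint H) {p : ℕ} [hp : Fact p.Prime]
    (P : Sylow p G) : (P : Subgroup G).Normal := by
  rw [← normalizer_eq_top_iff, ← index_eq_one, Nat.eq_one_iff_not_exists_prime_dvd]
  intro q hq hdvd
  have := Fact.mk hq
  have hle : ∃ Q : Sylow q G, (Q : Subgroup G) ≤ normalizer (P : Set G) := by
    rcases eq_or_ne p q with rfl | hpq
    · exact ⟨P, le_normalizer⟩
    · exact ⟨default, (hH.sylow_le_centralizer hpq P _).trans (centralizer_le_normalizer _)⟩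
  obtain ⟨Q, hQ⟩ := hle
  exact Q.not_dvd_index (hdvd.trans (index_dvd_of_le hQ))

theorem isNilpotent [Finite G] (hH : IsRegularPoint H) : Group.IsNilpotent G :=
  (Group.isNilpotent_of_finite_tfae.out 3 0).mp fun _ hp P => hH.sylow_normal (hp := hp) P

theorem map_mulEquiv (hH : IsRegularPoint H) (e : G ≃* G') :
    IsRegularPoint (H.map e.toMonoidHom) := by
  intro α hα L
  let β : MulAut G := (e.trans α).trans e.symm
  have hβ (K : Subgroup G) :
      (K.map β.toMonoidHom).map e.toMonoidHom = (K.map e.toMonoidHom).map α.toMonoidHom := by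
    have hcomp : e.toMonoidHom.comp β.toMonoidHom = α.toMonoidHom.comp e.toMonoidHom :=
      MonoidHom.ext fun x => e.apply_symm_apply _
    rw [map_map, map_map, hcomp]
  have hβH : H.map β.toMonoidHom = H := map_injective e.injective ((hβ H).trans hα)
  obtain ⟨K, rfl⟩ : ∃ K : Subgroup G, K.map e.toMonoidHom = L :=
    ⟨_, map_comap_eq_self_of_surjective (f := e.toMonoidHom) e.surjective L⟩
  rw [← hβ, hH β hβH]

theorem map_eval {ι : Type*} [Finite ι] {A : ι → Type*} [∀ i, Group (A i)] [∀ i, Finite (A i)]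
    {H : Subgroup (∀ i, A i)} (hH : IsRegularPoint H)
    (hA : Pairwise fun i j => (Nat.card (A i)).Coprime (Nat.card (A j))) (i : ι) :
    IsRegularPoint (H.map (Pi.evalMonoidHom A i)) := by
  classical
  intro α hα L
  let β : MulAut (∀ i, A i) := MulEquiv.piCongrRight (Function.update (fun _ => .refl _) i α)
  have hβ (x : ∀ i, A i) : β x = Function.update x i (α (x i)) := by
    funext j
    rcases eq_or_ne j i with rfl | hj
    · simp [β]
    · simp [β, hj]
  have hβH (x : ∀ i, A i) (hx : x ∈ H) : β x ∈ H := by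
    obtain ⟨y, hy, hyx⟩ : α (x i) ∈ H.map (Pi.evalMonoidHom A i) :=
      hα ▸ mem_map_of_mem _ (mem_map_of_mem _ hx)
    have hmem {z : ∀ i, A i} (hz : z ∈ H) : Pi.mulSingle i (z i) ∈ H :=
      zpowers_le.mpr hz (mulSingle_mem_zpowers hA z i)
    have heq : β x = Pi.mulSingle i (y i) * (Pi.mulSingle i (x i))⁻¹ * x := by
      rw [hβ]
      funext j
      rcases eq_or_ne j i with rfl | hj
      · simpa using hyx.symm
      · simp [hj]
    rw [heq]
    exact mul_mem (mul_mem (hmem hy) (inv_mem (hmem hx))) hx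
  refine map_eq_self_of_forall_mem fun a ha => ?_
  have h : β (Pi.mulSingle i a) ∈ L.map (MonoidHom.mulSingle A i) := by
    rw [← hH β (map_eq_self_of_forall_mem hβH) (L.map (MonoidHom.mulSingle A i))]
    exact mem_map_of_mem _ (mem_map_of_mem (MonoidHom.mulSingle A i) ha)
  obtain ⟨b, hb, hba⟩ := h
  have hb_eq : b = α a := by simpa [hβ] using congrFun hba i
  exact hb_eq ▸ hb

end IsRegularPoint

section Index

variable {G : Type*} [Group G] {M S : Subgroup G} {p : ℕ} {y : G}

theorem isCoatom_of_index_prime (hM : M.index.Prime) : IsCoatom M := by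
  have : M.FiniteIndex := ⟨hM.ne_zero⟩
  refine ⟨fun h => hM.ne_one (index_eq_one.mpr h), fun L hL => index_eq_one.mp ?_⟩
  exact ((Nat.dvd_prime hM).mp (index_dvd_of_le hL.le)).resolve_right (index_strictAnti hL).ne

theorem sup_zpowers_eq_top (hM : M.index.Prime) (hy : y ∉ M) : M ⊔ zpowers y = ⊤ :=
  (isCoatom_of_index_prime hM).2 _ <| lt_of_le_of_ne le_sup_left fun h =>
    hy (h ▸ mem_sup_right (mem_zpowers y))

theorem index_dvd_of_zpow_mem [M.Normal] (hM : M.index.Prime) (hy : y ∉ M) {i : ℤ}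
    (hi : y ^ i ∈ M) : (M.index : ℤ) ∣ i := by
  by_contra h
  rw [Int.natCast_dvd] at h
  refine hy (mem_of_pow_mem_of_coprime ?_ (M.pow_index_mem y)
    ((Nat.Prime.coprime_iff_not_dvd hM).mpr h).symm)
  exact (Int.natAbs_eq i).elim (fun h => by rwa [h, zpow_natCast] at hi)
    fun h => by rwa [h, zpow_neg, inv_mem_iff, zpow_natCast] at hi

theorem eq_top_of_forall_notMem (hM : M ≠ ⊤) (h : ∀ y ∉ M, y ∈ S) : S = ⊤ := by
  obtain ⟨y, hy⟩ : ∃ y, y ∉ M := by simpa [SetLike.ext_iff] using hM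
  refine eq_top_iff.mpr fun x _ => ?_
  by_cases hx : x ∈ M
  · have hxy : x * y ∉ M := fun hxy => hy ((M.mul_mem_cancel_left hx).mp hxy)
    exact (S.mul_mem_cancel_right (h y hy)).mp (h (x * y) hxy)
  · exact h x hx

end Index

section Shear

variable {G N : Type*} [Group G] [Group N] {M : Subgroup G} [M.Normal]

theorem conjNormal_zpow_map {y : G} {w : N} {f : M →* N}
    (hconj : ∀ m, f (MulAut.conjNormal y m) = w * f m * w⁻¹) (i : ℤ) (m : M) :
    f (MulAut.conjNormal (y ^ i) m) = w ^ i * f m * (w ^ i)⁻¹ := by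
  induction i generalizing m with
  | zero => simp
  | succ i ih =>
    rw [zpow_add_one, map_mul, MulAut.mul_apply, ih, hconj, zpow_add_one]
    group
  | pred i ih =>
    have h : f (MulAut.conjNormal y⁻¹ m) = w⁻¹ * f m * w := by
      have := hconj (MulAut.conjNormal y⁻¹ m)
      rw [← MulAut.mul_apply, ← map_mul, mul_inv_cancel, map_one, MulAut.one_apply] at this
      rw [this]
      group
    rw [zpow_sub_one, map_mul, MulAut.mul_apply, ih, h, zpow_sub_one]
    group

theorem exists_monoidHom_extending {y : G} {w : N} (f : M →* N) (htop : M ⊔ zpowers y = ⊤)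
    (hconj : ∀ m, f (MulAut.conjNormal y m) = w * f m * w⁻¹)
    (hzpow : ∀ (i : ℤ) (hi : y ^ i ∈ M), f ⟨y ^ i, hi⟩ = w ^ i) :
    ∃ F : G →* N, (∀ m : M, F m = f m) ∧ F y = w := by
  let φ : Multiplicative ℤ →* MulAut M := MulAut.conjNormal.comp (zpowersHom G y)
  let π : M ⋊[φ] Multiplicative ℤ →* G := SemidirectProduct.lift M.subtype (zpowersHom G y)
    fun i => MonoidHom.ext fun m => by simp [φ, -map_zpow]
  let θ : M ⋊[φ] Multiplicative ℤ →* N := SemidirectProduct.lift f (zpowersHom N w)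
    fun i => MonoidHom.ext fun m => by
      simpa [φ, -map_zpow, ← map_zpow] using conjNormal_zpow_map hconj i.toAdd m
  have hπ : Function.Surjective π := by
    rw [← MonoidHom.range_eq_top, eq_top_iff, ← htop, sup_le_iff, zpowers_le]
    exact ⟨fun m hm => ⟨.inl ⟨m, hm⟩, by simp [π]⟩, ⟨.inr (.ofAdd 1), by simp [π]⟩⟩
  have hker : π.ker ≤ θ.ker := by
    rintro ⟨m, i⟩ hmi
    have hmy : (m : G) * y ^ i.toAdd = 1 := hmi
    have hy : y ^ i.toAdd = (m⁻¹ : M) := (inv_eq_of_mul_eq_one_right hmy).symm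
    have hw : f m⁻¹ = w ^ i.toAdd := by
      rw [← hzpow i.toAdd (hy ▸ SetLike.coe_mem _)]
      exact congrArg f (Subtype.ext hy.symm)
    change f m * w ^ i.toAdd = 1
    rw [← hw, ← map_mul, mul_inv_cancel, map_one]
  have hF := π.liftOfRightInverse_comp_apply _ (Function.rightInverse_surjInv hπ) ⟨θ, hker⟩
  refine ⟨π.liftOfSurjective hπ ⟨θ, hker⟩, fun m => ?_, ?_⟩
  · simpa [π, θ] using hF (.inl m)
  · simpa [π, θ] using hF (.inr (.ofAdd 1))

end Shear

theorem IsRegularPoint.mem_zpowers_of_mul_pow_eq {G : Type*} [Group G] [Finite G]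
    {H M : Subgroup G} [M.Normal] (hH : IsRegularPoint H) (hM : M.index.Prime) (hHM : H ≤ M)
    {y z : G} (hy : y ∉ M) (hz : z ∈ M) (hzM : M ≤ centralizer {z})
    (hpow : (y * z) ^ M.index = y ^ M.index) : z ∈ zpowers y := by
  have hconj (m : M) : (MulAut.conjNormal y m : G) = y * z * m * (y * z)⁻¹ := by
    have h := mem_centralizer_singleton_iff.mp (hzM m.2)
    rw [MulAut.conjNormal_apply, mul_assoc y z, ← h]
    group
  have hzpow (i : ℤ) (hi : y ^ i ∈ M) : y ^ i = (y * z) ^ i := by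
    obtain ⟨j, rfl⟩ := index_dvd_of_zpow_mem hM hy hi
    rw [zpow_mul, zpow_mul, zpow_natCast, zpow_natCast, hpow]
  obtain ⟨F, hFM, hFy⟩ :=
    exists_monoidHom_extending M.subtype (sup_zpowers_eq_top hM hy) hconj hzpow
  have hF : Function.Surjective F := by
    rw [← MonoidHom.range_eq_top, eq_top_iff, ← sup_zpowers_eq_top hM hy, sup_le_iff, zpowers_le]
    have hMF : M ≤ F.range := fun m hm => ⟨m, hFM ⟨m, hm⟩⟩
    exact ⟨hMF, (F.range.mul_mem_cancel_right (hMF hz)).mp ⟨y, hFy⟩⟩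
  let α : MulAut G := MulEquiv.ofBijective F (Finite.surjective_iff_bijective.mp hF)
  have hαH : H.map α.toMonoidHom = H :=
    map_eq_self_of_forall_mem fun h hh => (hFM ⟨h, hHM hh⟩).symm ▸ hh
  have hyz : y * z ∈ zpowers y := by
    rw [← hH α hαH (zpowers y)]
    exact ⟨y, mem_zpowers y, hFy⟩
  exact ((zpowers y).mul_mem_cancel_left (mem_zpowers y)).mp hyz

theorem mem_zpowers_of_pow_orderOf_eq_one {G : Type*} [Group G] [Finite G] {c x y : G}
    (hc : c ∈ zpowers y) (hx : x ∈ zpowers y) (hxc : x ^ orderOf c = 1) : x ∈ zpowers c := by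
  let : CommGroup (zpowers y) := IsCyclic.commGroup
  let K : Subgroup (zpowers y) := (powMonoidHom (orderOf c)).ker
  have hle : zpowers (⟨c, hc⟩ : zpowers y) ≤ K :=
    zpowers_le.mpr (Subtype.ext (pow_orderOf_eq_one c))
  have hcard : Nat.card K ≤ Nat.card (zpowers (⟨c, hc⟩ : zpowers y)) := by
    rw [IsCyclic.card_powMonoidHom_ker, Nat.card_zpowers, Nat.card_zpowers, orderOf_mk]
    exact Nat.gcd_le_right _ (orderOf_pos c)
  have hxK : (⟨x, hx⟩ : zpowers y) ∈ K := Subtype.ext hxc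
  rw [← eq_of_le_of_card_ge hle hcard] at hxK
  obtain ⟨n, hn⟩ := hxK
  exact ⟨n, congrArg Subtype.val hn⟩

theorem eq_of_mem_zpowers_of_orderOf_eq_two {G : Type*} [Group G] {c w : G} (hc : orderOf c = 2)
    (hw : w ∈ zpowers c) (hw1 : w ≠ 1) : w = c := by
  obtain ⟨n, rfl⟩ := hw
  dsimp only at hw1 ⊢
  rw [← zpow_mod_orderOf, hc] at hw1 ⊢
  rcases Int.emod_two_eq_zero_or_one n with hn | hn
  · simp [hn] at hw1
  · simp [hn]

theorem pow_choose_two_eq_one {G : Type*} [Monoid G] {p : ℕ} (hp : p.Prime) (hp2 : p ≠ 2) {w : G}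
    (hw : w ^ p = 1) : w ^ p.choose 2 = 1 := by
  obtain ⟨m, hm⟩ := hp.dvd_choose_self two_ne_zero (lt_of_le_of_ne hp.two_le hp2.symm)
  rw [hm, pow_mul, hw, one_pow]

section PGroup

variable {p : ℕ} {P : Type*} [Group P] {M S : Subgroup P}

theorem exists_pow_notMem_and_pow_mem (hP : IsPGroup p P) {k : P} (hk : k ∉ S) :
    ∃ n : ℕ, k ^ n ∉ S ∧ (k ^ n) ^ p ∈ S := by
  classical
  have hex : ∃ a : ℕ, k ^ p ^ a ∈ S := by
    obtain ⟨a, ha⟩ := isPGroup_iff_pow_pow_eq_one.mp hP k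
    exact ⟨a, ha ▸ S.one_mem⟩
  obtain ⟨b, hb⟩ := Nat.exists_eq_succ_of_ne_zero fun h : Nat.find hex = 0 =>
    hk (by simpa [h] using Nat.find_spec hex)
  refine ⟨p ^ b, Nat.find_min hex (by lia), ?_⟩
  rw [← pow_mul, ← pow_succ, ← Nat.succ_eq_add_one, ← hb]
  exact Nat.find_spec hex

variable [hp : Fact p.Prime] [Finite P]

theorem normal_of_index_eq_prime (hP : IsPGroup p P) (hM : M.index = p) : M.Normal :=
  have := hP.isNilpotent
  Group.normalizerCondition_of_isNilpotent.normal_of_coatom M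
    (isCoatom_of_index_prime (hM ▸ hp.out))

theorem exists_le_index_eq_prime (hP : IsPGroup p P) (hS : S ≠ ⊤) :
    ∃ M : Subgroup P, S ≤ M ∧ M.index = p := by
  obtain ⟨n, hn⟩ := IsPGroup.iff_card.mp hP
  obtain ⟨m, hm⟩ := IsPGroup.iff_card.mp (hP.to_subgroup S)
  have hmn : m < n := by
    refine (Nat.pow_lt_pow_iff_right hp.out.one_lt).mp ?_
    rw [← hn, ← hm]
    exact lt_of_le_of_ne (card_le_card_group S) fun h => hS ((card_eq_iff_eq_top S).mp h)
  obtain ⟨M, hM, hSM⟩ := Sylow.exists_subgroup_card_pow_prime_le (n := m) (m := n - 1) p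
    (hn ▸ pow_dvd_pow p (n.sub_le 1)) S hm (by lia)
  refine ⟨M, hSM, Nat.eq_of_mul_eq_mul_left (pow_pos hp.out.pos (n - 1)) ?_⟩
  rw [← hM, M.card_mul_index, hn, hM, ← pow_succ, Nat.sub_add_cancel (by lia)]

theorem exists_mem_inf_center_orderOf_eq (hP : IsPGroup p P) [M.Normal] (hM : M ≠ ⊥) :
    ∃ c ∈ M, c ∈ center P ∧ orderOf c = p := by
  have hcard : p ∣ Nat.card M :=
    (hP.to_subgroup M).card_eq_or_dvd.resolve_left (mt card_eq_one.mp hM)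
  obtain ⟨b, hb, hb1⟩ :=
    (hP.of_equiv ConjAct.toConjAct).exists_fixed_point_of_prime_dvd_card_of_fixed_point M hcard
      (a := 1) fun g => smul_one g
  have hbc : (b : P) ∈ center P := mem_center_iff.mpr fun g =>
    mul_inv_eq_iff_eq_mul.mp (congrArg Subtype.val (hb (ConjAct.toConjAct g)))
  obtain ⟨n, hn1, hnp⟩ := exists_pow_notMem_and_pow_mem hP (S := ⊥) (k := (b : P))
    (fun h => hb1 (Subtype.ext (mem_bot.mp h).symm))
  exact ⟨b ^ n, pow_mem b.2 n, pow_mem hbc n, orderOf_eq_prime (mem_bot.mp hnp) hn1⟩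

end PGroup

theorem exists_mem_zpowers_sq_eq_commute {G : Type*} [Group G] [Finite G] (hG : IsPGroup 2 G)
    {c y : G} (hc : orderOf c = 2) (hcy : c ∈ zpowers y) (hy : y ^ 4 ≠ 1) :
    ∃ z ∈ zpowers y, z ^ 2 = c ∧ ∀ k ∈ baerNorm G, Commute k z := by
  obtain ⟨n, hn⟩ := IsPGroup.iff_orderOf.mp hG y
  have hn3 : 3 ≤ n := by
    by_contra! h
    refine hy (orderOf_dvd_iff_pow_eq_one.mp ?_)
    exact hn ▸ pow_dvd_pow 2 (show n ≤ 2 by lia)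
  obtain ⟨m, rfl⟩ := Nat.exists_eq_add_of_le' hn3
  have hz2 : (y ^ 2 ^ (m + 1)) ^ 2 ≠ 1 := by
    rw [← pow_mul, ← pow_succ, Ne, ← orderOf_dvd_iff_pow_eq_one, hn, Nat.pow_dvd_pow_iff_le_right']
    lia
  have hz4 : (y ^ 2 ^ (m + 1)) ^ 2 ^ 2 = 1 := by
    rw [← pow_mul, ← pow_add, ← hn, pow_orderOf_eq_one]
  refine ⟨y ^ 2 ^ (m + 1), npow_mem_zpowers y _, ?_, fun k hk => ?_⟩
  · refine eq_of_mem_zpowers_of_orderOf_eq_two hc (mem_zpowers_of_pow_orderOf_eq_one hcy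
      (pow_mem (npow_mem_zpowers y _) 2) ?_) hz2
    rw [hc, ← pow_mul]
    exact hz4
  · exact baerNorm.commute_of_mem_zpowers Nat.prime_two hk (m := 2)
      (hn ▸ pow_dvd_pow 2 (by lia)) (npow_mem_zpowers y _) hz4

/-- `M` has index `p` in a noncyclic `p`-group and contains a regular point `H`: the configuration
to be refuted. It is inherited by the centralizers of suitable elements
(`NoncyclicRegularPair.centralizer_singleton`), so `M` is not fixed once and for all. -/
structure NoncyclicRegularPair {P : Type*} [Group P] (p : ℕ) (H M : Subgroup P) : Prop where
  isPGroup : IsPGroup p P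
  not_isCyclic : ¬IsCyclic P
  isRegularPoint : IsRegularPoint H
  index_eq : M.index = p
  le : H ≤ M

namespace NoncyclicRegularPair

variable {p : ℕ} [hp : Fact p.Prime] {P : Type*} [Group P] {H M : Subgroup P} {c u v x y : P}

theorem index_prime (h : NoncyclicRegularPair p H M) : M.index.Prime :=
  h.index_eq ▸ hp.out

theorem exists_notMem (h : NoncyclicRegularPair p H M) : ∃ y, y ∉ M := by
  simpa [SetLike.ext_iff] using (isCoatom_of_index_prime h.index_prime).1

theorem exists_not_baerNorm_le_zpowers (h : NoncyclicRegularPair p H M) :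
    ∃ y ∉ M, ¬baerNorm P ≤ zpowers y := by
  by_contra! hle
  have htop : centralizer (baerNorm P : Set P) = ⊤ :=
    eq_top_of_forall_notMem (isCoatom_of_index_prime h.index_prime).1 fun y hy k hk => by
      obtain ⟨i, rfl⟩ := mem_zpowers_iff.mp (hle y hy hk)
      exact (Commute.refl y).zpow_left i
  have hHc : centralizer (H : Set P) = ⊤ :=
    top_le_iff.mp (htop ▸ centralizer_le h.isRegularPoint.le_baerNorm)
  obtain ⟨y, hy⟩ := h.exists_notMem
  refine h.not_isCyclic ⟨y, fun x => hle y hy (h.isRegularPoint.centralizer_le_baerNorm ?_)⟩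
  exact hHc ▸ mem_top x

variable [Finite P]

theorem normal (h : NoncyclicRegularPair p H M) : M.Normal :=
  normal_of_index_eq_prime h.isPGroup h.index_eq

theorem exists_mem_center_orderOf_eq (h : NoncyclicRegularPair p H M) :
    ∃ c ∈ M, c ∈ center P ∧ orderOf c = p := by
  have := h.normal
  refine exists_mem_inf_center_orderOf_eq h.isPGroup fun hbot => h.not_isCyclic ?_
  exact isCyclic_of_prime_card (p := p) (by rw [← index_bot, ← hbot, h.index_eq])

theorem mem_zpowers_of_mem_inf_center (h : NoncyclicRegularPair p H M) (hc : c ∈ M ⊓ center P)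
    (hcp : c ^ p = 1) (hy : y ∉ M) : c ∈ zpowers y := by
  have := h.normal
  refine h.isRegularPoint.mem_zpowers_of_mul_pow_eq h.index_prime h.le hy hc.1
    (fun x _ => mem_centralizer_singleton_iff.mpr (mem_center_iff.mp hc.2 x)) ?_
  rw [Commute.mul_pow (mem_center_iff.mp hc.2 y), h.index_eq, hcp, mul_one]

theorem mem_of_pow_eq_one (h : NoncyclicRegularPair p H M) (hx : x ^ p = 1) : x ∈ M := by
  by_contra hxM
  obtain ⟨c, hcM, hc, rfl⟩ := h.exists_mem_center_orderOf_eq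
  have hcx := h.mem_zpowers_of_mem_inf_center ⟨hcM, hc⟩ (pow_orderOf_eq_one c) hxM
  exact hxM (zpowers_le.mpr hcM (mem_zpowers_of_pow_orderOf_eq_one hcx (mem_zpowers x) hx))

theorem mem_zpowers_of_mem_center (h : NoncyclicRegularPair p H M) (hc : c ∈ center P)
    (hcp : c ^ p = 1) (hy : y ∉ M) : c ∈ zpowers y :=
  h.mem_zpowers_of_mem_inf_center ⟨h.mem_of_pow_eq_one hcp, hc⟩ hcp hy

theorem commutatorElement_mem_zpowers (h : NoncyclicRegularPair p H M) (hco : orderOf c = p)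
    (hc : c ∈ center P) (hv : v ∈ baerNorm P) (hvp : v ^ p ∈ center P) (x : P) :
    ⁅v, x⁆ ∈ zpowers c := by
  have hcp : c ^ p = 1 := hco ▸ pow_orderOf_eq_one c
  have hnotMem {y : P} (hy : y ∉ M) : ⁅v, y⁆ ∈ zpowers c := by
    refine mem_zpowers_of_pow_orderOf_eq_one (h.mem_zpowers_of_mem_center hc hcp hy)
      (baerNorm.commutatorElement_mem_zpowers hv y) ?_
    rw [hco, ← baerNorm.commutatorElement_pow_left hv, commutatorElement_eq_one_iff_mul_comm]
    exact (mem_center_iff.mp hvp y).symm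
  by_cases hx : x ∈ M
  · obtain ⟨y, hy⟩ := h.exists_notMem
    have hxy := hnotMem fun hxy => hy ((M.mul_mem_cancel_left hx).mp hxy)
    rw [commutatorElement_mul_right_of_mem_center (zpowers_le.mpr hc (hnotMem hy))] at hxy
    exact ((zpowers c).mul_mem_cancel_right (hnotMem hy)).mp hxy
  · exact hnotMem hx

theorem index_centralizer_singleton (h : NoncyclicRegularPair p H M) (hv : v ∈ baerNorm P)
    (hvp : v ^ p ∈ center P) (hvc : v ∉ center P) : (centralizer {v}).index = p := by
  obtain ⟨c, -, hc, hco⟩ := h.exists_mem_center_orderOf_eq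
  have hmem := h.commutatorElement_mem_zpowers hco hc hv hvp
  let f : P →* P := MonoidHom.mk' (fun x => ⁅v, x⁆) fun x y =>
    commutatorElement_mul_right_of_mem_center (zpowers_le.mpr hc (hmem y)) x
  have hker : f.ker = centralizer {v} := by
    ext x
    rw [MonoidHom.mem_ker, mem_centralizer_singleton_iff]
    exact commutatorElement_eq_one_iff_mul_comm.trans eq_comm
  have hdvd : Nat.card f.range ∣ p := by
    rw [← hco, ← Nat.card_zpowers]
    exact card_dvd_of_le fun _ ⟨x, hx⟩ => hx ▸ hmem x
  rw [← index_ker, hker] at hdvd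
  refine ((Nat.dvd_prime hp.out).mp hdvd).resolve_left fun hindex => hvc ?_
  exact centralizer_eq_top_iff_subset.mp (index_eq_one.mp hindex) rfl

theorem centralizer_singleton (h : NoncyclicRegularPair p H M) (hv : v ∈ centralizer (H : Set P))
    (hvp : v ^ p ∈ center P) (hvc : v ∉ center P) :
    NoncyclicRegularPair p H (centralizer {v}) where
  isPGroup := h.isPGroup
  not_isCyclic := h.not_isCyclic
  isRegularPoint := h.isRegularPoint
  index_eq :=
    h.index_centralizer_singleton (h.isRegularPoint.centralizer_le_baerNorm hv) hvp hvc
  le := fun x hx => mem_centralizer_singleton_iff.mpr (mem_centralizer_iff.mp hv x hx)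

theorem mul_pow_ne (h : NoncyclicRegularPair p H M) (hv : v ∈ centralizer (H : Set P))
    (hvp : v ^ p ∈ center P) (hyv : ¬Commute y v) : (y * v) ^ p ≠ y ^ p := fun hpow => by
  have h' := h.centralizer_singleton hv hvp fun hvc => hyv (mem_center_iff.mp hvc y)
  have := h'.normal
  have hy : y ∉ centralizer {v} := fun hy => hyv (mem_centralizer_singleton_iff.mp hy)
  obtain ⟨n, rfl⟩ := h'.isRegularPoint.mem_zpowers_of_mul_pow_eq h'.index_prime h'.le hy
    (mem_centralizer_singleton_iff.mpr rfl) le_rfl (h'.index_eq.symm ▸ hpow)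
  exact hyv ((Commute.refl y).zpow_right n)

theorem mem_center_of_pow_eq_one_of_ne_two (h : NoncyclicRegularPair p H M) (hp2 : p ≠ 2)
    (hv : v ∈ centralizer (H : Set P)) (hvp : v ^ p = 1) : v ∈ center P := by
  refine mem_center_iff.mpr fun y => by_contra fun hyv => ?_
  have hvN := h.isRegularPoint.centralizer_le_baerNorm hv
  refine h.mul_pow_ne hv (hvp ▸ one_mem _) hyv ?_
  have hw : ⁅v, y⁆ ^ p = 1 := by
    rw [← baerNorm.commutatorElement_pow_left hvN, hvp, commutatorElement_one_left]
  rw [baerNorm.mul_pow hvN, hvp, pow_choose_two_eq_one hp.out hp2 hw, mul_one, mul_one]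

theorem commutatorElement_eq_of_not_commute (h : NoncyclicRegularPair 2 H M)
    (hco : orderOf c = 2) (hc : c ∈ center P) (hv : v ∈ baerNorm P) (hvc : v ^ 2 ∈ center P)
    (hvy : ¬Commute v y) : ⁅v, y⁆ = c :=
  eq_of_mem_zpowers_of_orderOf_eq_two hco (h.commutatorElement_mem_zpowers hco hc hv hvc y)
    (mt commutatorElement_eq_one_iff_commute.mp hvy)

theorem mem_center_of_orderOf_sq_eq_two (h : NoncyclicRegularPair 2 H M)
    (hv : v ∈ centralizer (H : Set P)) (hvc : v ^ 2 ∈ center P) (hv2 : orderOf (v ^ 2) = 2) :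
    v ∈ center P := by
  refine mem_center_iff.mpr fun y => by_contra fun hyv => h.mul_pow_ne hv hvc hyv ?_
  have hvN := h.isRegularPoint.centralizer_le_baerNorm hv
  have hw : ⁅v, y⁆ = v ^ 2 :=
    h.commutatorElement_eq_of_not_commute hv2 hvc hvN hvc fun hvy => hyv hvy.symm
  rw [baerNorm.mul_pow hvN, hw, Nat.choose_self, pow_one, mul_assoc, ← sq,
    orderOf_dvd_iff_pow_eq_one.mp hv2.dvd, mul_one]

theorem mem_centralizer_of_pow_eq_one (h : NoncyclicRegularPair p H M) (hu : u ^ p = 1) :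
    u ∈ centralizer (H : Set P) := fun _ hk =>
  baerNorm.commute_of_pow_prime_eq_one hp.out (h.isRegularPoint.le_baerNorm hk) hu

end NoncyclicRegularPair

/-- The relations `k² = y² = ⁅k, y⁆ = c` of the quaternion group of order eight, in which `c` is the
central involution. -/
structure QuaternionRelations {G : Type*} [Group G] (c k y : G) : Prop where
  sq_left : k ^ 2 = c
  sq_right : y ^ 2 = c
  commutatorElement_eq : ⁅k, y⁆ = c

theorem QuaternionRelations.mul_left {G : Type*} [Group G] {c k y : G}
    (h : QuaternionRelations c k y) : QuaternionRelations c (y * k) y where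
  sq_left := by
    have hky : k * y = y ^ 3 * k := by
      rw [pow_succ, h.sq_right, ← h.commutatorElement_eq, commutatorElement_def]
      group
    have hy4 : y ^ 4 = 1 := by
      have hconj : k * y ^ 2 * k⁻¹ = y ^ 2 := by
        rw [h.sq_right, ← h.sq_left]
        group
      rw [← conj_pow, hky, mul_inv_cancel_right, ← pow_mul] at hconj
      exact mul_left_cancel (a := y ^ 2) (by rw [← pow_add, hconj, mul_one])
    calc (y * k) ^ 2 = y * (k * y) * k := by simp only [sq, mul_assoc]
      _ = y ^ 4 * k ^ 2 := by rw [hky, pow_succ' y 3, sq k]; simp only [mul_assoc]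
      _ = c := by rw [hy4, h.sq_left, one_mul]
  sq_right := h.sq_right
  commutatorElement_eq := by
    have hyc : y * c * y⁻¹ = c := by
      rw [← h.sq_right]
      group
    rw [← hyc, ← h.commutatorElement_eq]
    simp only [commutatorElement_def]
    group

namespace NoncyclicRegularPair

variable {p : ℕ} [hp : Fact p.Prime] {P : Type*} [Group P] [Finite P] {H M : Subgroup P}
  {c k u y : P}

theorem pow_four_ne_one (h : NoncyclicRegularPair 2 H (centralizer {u})) (hu : u ∈ baerNorm P)
    (hu2 : u ^ 2 = 1) (hyu : ¬Commute y u) (hc : c ∈ center P) (hco : orderOf c = 2) :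
    y ^ 4 ≠ 1 := by
  intro hy4
  have hy : y ∉ centralizer {u} := fun hy => hyu (mem_centralizer_singleton_iff.mp hy)
  have hc2 : c ^ 2 = 1 := orderOf_dvd_iff_pow_eq_one.mp hco.dvd
  have hw : ⁅u, y⁆ = c := h.commutatorElement_eq_of_not_commute hco hc hu (hu2 ▸ one_mem _)
    fun huy => hyu huy.symm
  have hyc : y ^ 2 = c := by
    refine eq_of_mem_zpowers_of_orderOf_eq_two hco ?_ (mt h.mem_of_pow_eq_one hy)
    exact mem_zpowers_of_pow_orderOf_eq_one (h.mem_zpowers_of_mem_center hc hc2 hy)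
      (npow_mem_zpowers y 2) (by rw [hco, ← pow_mul, hy4])
  have hyu2 : (y * u) ^ 2 = 1 := by
    rw [baerNorm.mul_pow hu, hu2, hyc, hw, mul_one, Nat.choose_self, pow_one, ← sq, hc2]
  exact hy (((centralizer {u}).mul_mem_cancel_right (mem_centralizer_singleton_iff.mpr rfl)).mp
    (h.mem_of_pow_eq_one hyu2))

theorem mem_center_of_sq_eq_one (h : NoncyclicRegularPair 2 H M) (hu : u ^ 2 = 1) :
    u ∈ center P := by
  have huH := h.mem_centralizer_of_pow_eq_one hu
  by_contra huc
  have h' := h.centralizer_singleton huH (hu ▸ one_mem _) huc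
  obtain ⟨y, hy⟩ := h'.exists_notMem
  obtain ⟨c, -, hc, hco⟩ := h'.exists_mem_center_orderOf_eq
  have hcy := h'.mem_zpowers_of_mem_center hc (orderOf_dvd_iff_pow_eq_one.mp hco.dvd) hy
  have hy4 : y ^ 4 ≠ 1 := h'.pow_four_ne_one (h.isRegularPoint.centralizer_le_baerNorm huH) hu
    (fun hyu => hy (mem_centralizer_singleton_iff.mpr hyu)) hc hco
  obtain ⟨z, -, hzc, hzN⟩ := exists_mem_zpowers_sq_eq_commute h.isPGroup hco hcy hy4
  have hmem {v : P} (hv : v ∈ centralizer (H : Set P)) (hvc : v ^ 2 = c) : v ∈ center P :=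
    h.mem_center_of_orderOf_sq_eq_two hv (hvc ▸ hc) (hvc ▸ hco)
  have hzH : z ∈ centralizer (H : Set P) := fun k hk => hzN k (h.isRegularPoint.le_baerNorm hk)
  have hz := hmem hzH hzc
  refine huc (((center P).mul_mem_cancel_left hz).mp (hmem (mul_mem hzH huH) ?_))
  rw [Commute.mul_pow (mem_center_iff.mp hz u).symm, hzc, hu, mul_one]

theorem mem_center_of_pow_eq_one (h : NoncyclicRegularPair p H M) (hu : u ^ p = 1) :
    u ∈ center P := by
  by_cases hp2 : p = 2
  · subst hp2
    exact h.mem_center_of_sq_eq_one hu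
  · exact h.mem_center_of_pow_eq_one_of_ne_two hp2 (h.mem_centralizer_of_pow_eq_one hu) hu

theorem mem_zpowers_of_pow_eq_one (h : NoncyclicRegularPair p H M) (hc : c ∈ center P)
    (hco : orderOf c = p) (hu : u ^ p = 1) : u ∈ zpowers c := by
  obtain ⟨y, hy⟩ := h.exists_notMem
  have hcp : c ^ p = 1 := orderOf_dvd_iff_pow_eq_one.mp hco.dvd
  exact mem_zpowers_of_pow_orderOf_eq_one (h.mem_zpowers_of_mem_center hc hcp hy)
    (h.mem_zpowers_of_mem_center (h.mem_center_of_pow_eq_one hu) hu hy) (hco ▸ hu)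

theorem exists_pow_mul_pow_eq_one (h : NoncyclicRegularPair p H M) (hy : y ∉ M)
    (hk : k ^ p ∈ zpowers y) : ∃ n : ℕ, (y ^ n) ^ p * k ^ p = 1 := by
  have := h.normal
  obtain ⟨i, hi⟩ := mem_zpowers_iff.mp hk
  have hiM : y ^ i ∈ M := hi ▸ h.index_eq ▸ M.pow_index_mem k
  obtain ⟨j, rfl⟩ := index_dvd_of_zpow_mem h.index_prime hy hiM
  obtain ⟨n, hn⟩ := mem_powers_iff_mem_zpowers.mpr (zpow_mem_zpowers y (-j))
  refine ⟨n, ?_⟩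
  dsimp only at hn
  rw [hn, ← hi, h.index_eq, ← zpow_natCast, ← zpow_mul, ← zpow_add]
  simp [mul_comm]

theorem pow_four_eq_one (h : NoncyclicRegularPair 2 H M) (hc : c ∈ center P)
    (hco : orderOf c = 2) (hcy : c ∈ zpowers y) (hk : k ∈ baerNorm P) (hky : k ∉ zpowers y)
    {n : ℕ} (hn : (y ^ n * k) ^ 2 = c) : y ^ 4 = 1 := by
  by_contra hy4
  obtain ⟨z, hzy, hzc, hzN⟩ := exists_mem_zpowers_sq_eq_commute h.isPGroup hco hcy hy4
  have hzyk : Commute z (y ^ n * k) := by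
    obtain ⟨i, rfl⟩ := mem_zpowers_iff.mp hzy
    exact (((Commute.refl y).zpow_left i).pow_right n).mul_right (hzN k hk).symm
  have hmem : z * (y ^ n * k) ∈ zpowers c := by
    refine h.mem_zpowers_of_pow_eq_one hc hco ?_
    rw [hzyk.mul_pow, hzc, hn, ← sq, orderOf_dvd_iff_pow_eq_one.mp hco.dvd]
  exact hky (((zpowers y).mul_mem_cancel_left (npow_mem_zpowers y n)).mp
    (((zpowers y).mul_mem_cancel_left hzy).mp (zpowers_le.mpr hcy hmem)))

theorem quaternionRelations (h : NoncyclicRegularPair p H M) (hc : c ∈ center P)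
    (hco : orderOf c = p) (hy : y ∉ M) (hk : k ∈ baerNorm P) (hkp : k ^ p ∈ zpowers y)
    (hky : k ∉ zpowers y) : p = 2 ∧ QuaternionRelations c k y := by
  have hcp : c ^ p = 1 := orderOf_dvd_iff_pow_eq_one.mp hco.dvd
  have hcy := h.mem_zpowers_of_mem_center hc hcp hy
  obtain ⟨n, hn⟩ := h.exists_pow_mul_pow_eq_one hy hkp
  have hu : (y ^ n * k) ^ p = (⁅k, y⁆ ^ p.choose 2) ^ n := by
    rw [baerNorm.mul_pow hk, hn, one_mul, baerNorm.commutatorElement_pow_right hk, pow_right_comm]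
  have hu1 : (y ^ n * k) ^ p ≠ 1 := fun hyk => hky <|
    ((zpowers y).mul_mem_cancel_left (npow_mem_zpowers y n)).mp
      (zpowers_le.mpr hcy (h.mem_zpowers_of_pow_eq_one hc hco hyk))
  have hw : ⁅k, y⁆ ^ p = 1 := by
    obtain ⟨i, hi⟩ := mem_zpowers_iff.mp hkp
    rw [← baerNorm.commutatorElement_pow_left hk, commutatorElement_eq_one_iff_commute, ← hi]
    exact (Commute.refl y).zpow_left i
  obtain rfl : p = 2 := by
    by_contra hp2
    exact hu1 (by rw [hu, pow_choose_two_eq_one hp.out hp2 hw, one_pow])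
  rw [Nat.choose_self, pow_one] at hu
  have hwc : ⁅k, y⁆ = c := eq_of_mem_zpowers_of_orderOf_eq_two hco
    (h.mem_zpowers_of_pow_eq_one hc hco hw) fun hw1 => hu1 (by rw [hu, hw1, one_pow])
  have hcn : c ^ n = c := eq_of_mem_zpowers_of_orderOf_eq_two hco (npow_mem_zpowers c n)
    (by rwa [← hwc, ← hu])
  have hy4 : y ^ 4 = 1 := h.pow_four_eq_one hc hco hcy hk hky (by rw [hu, hwc, hcn])
  have hyc : y ^ 2 = c := eq_of_mem_zpowers_of_orderOf_eq_two hco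
    (h.mem_zpowers_of_pow_eq_one hc hco (by rw [← pow_mul, hy4])) (mt h.mem_of_pow_eq_one hy)
  refine ⟨rfl, ?_, hyc, hwc⟩
  rw [pow_right_comm, hyc, hcn] at hn
  exact mul_left_cancel (hn.trans ((sq c).symm.trans hcp).symm)

theorem mem_zpowers_of_commute {S : Subgroup P} (h : NoncyclicRegularPair 2 H M)
    (hc : c ∈ center P) (hco : orderOf c = 2) (hSN : S ≤ baerNorm P) (hcS : c ∈ S) (hy : y ∉ M)
    (hyS : y ∉ S) (hyc : y ^ 2 = c) {s : P} (hs : s ∈ S) (hsy : Commute s y) : s ∈ zpowers c := by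
  have hc1 : c ≠ 1 := fun hc1 => by simp [hc1] at hco
  have hsy' : s ∈ zpowers y := by
    by_contra hsy'
    obtain ⟨n, hn, hn2⟩ := exists_pow_notMem_and_pow_mem h.isPGroup hsy'
    have hQ := (h.quaternionRelations hc hco hy (pow_mem (hSN hs) n) hn2 hn).2
    exact hc1 (hQ.commutatorElement_eq ▸
      commutatorElement_eq_one_iff_commute.mpr (hsy.pow_left n))
  obtain ⟨i, rfl⟩ := mem_powers_iff_mem_zpowers.mpr hsy'
  have hi : 2 ∣ i := by
    by_contra hi
    exact hyS (mem_of_pow_mem_of_coprime (hyc ▸ hcS) hs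
      ((Nat.prime_two.coprime_iff_not_dvd).mpr hi))
  obtain ⟨j, rfl⟩ := hi
  exact ⟨j, by simp [pow_mul, hyc]⟩

theorem not_quaternionRelations {S : Subgroup P} (h : NoncyclicRegularPair 2 H M)
    (hc : c ∈ center P) (hco : orderOf c = 2) (hHS : H ≤ S) (hSN : S ≤ baerNorm P) (hk : k ∈ S)
    (hy : y ∉ M) (hyS : y ∉ S) : ¬QuaternionRelations c k y := by
  intro hQ
  have hcomm {s : P} (hs : s ∈ S) (hsy : Commute s y) : Commute k s := by
    have hsc := h.mem_zpowers_of_commute hc hco hSN (hQ.sq_left ▸ pow_mem hk 2) hy hyS hQ.sq_right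
      hs hsy
    exact mem_center_iff.mp (zpowers_le.mpr hc hsc) k
  have hkH : k ∈ centralizer (H : Set P) := by
    intro x hx
    by_cases hxy : Commute x y
    · exact (hcomm (hHS hx) hxy).symm
    · have hxw : ⁅x, y⁆ = c := by
        refine eq_of_mem_zpowers_of_orderOf_eq_two hco (h.mem_zpowers_of_pow_eq_one hc hco ?_)
          (mt commutatorElement_eq_one_iff_commute.mp hxy)
        rw [← baerNorm.commutatorElement_pow_right (hSN (hHS hx)), hQ.sq_right]
        exact commutatorElement_eq_one_iff_commute.mpr (mem_center_iff.mp hc x)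
      have hxk : ⁅x * k, y⁆ = 1 := by
        rw [commutatorElement_mul_left_of_mem_center (hQ.commutatorElement_eq ▸ hc),
          hQ.commutatorElement_eq, hxw, ← sq, orderOf_dvd_iff_pow_eq_one.mp hco.dvd]
      have hkxk := hcomm (mul_mem (hHS hx) hk) (commutatorElement_eq_one_iff_commute.mp hxk)
      have hkx : Commute k x := by simpa using hkxk.mul_right (Commute.refl k).inv_right
      exact hkx.symm
  have hkc := h.mem_center_of_orderOf_sq_eq_two hkH (hQ.sq_left ▸ hc) (hQ.sq_left ▸ hco)
  have hw := hQ.commutatorElement_eq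
  rw [commutatorElement_eq_one_iff_commute.mpr (mem_center_iff.mp hkc y).symm] at hw
  simp [← hw] at hco

theorem exists_quaternionRelations (h : NoncyclicRegularPair p H M) (hc : c ∈ center P)
    (hco : orderOf c = p) :
    p = 2 ∧ ∃ k ∈ baerNorm P, ∃ y ∉ M, QuaternionRelations c k y := by
  obtain ⟨y, hy, hle⟩ := h.exists_not_baerNorm_le_zpowers
  obtain ⟨k, hk, hky⟩ := SetLike.not_le_iff_exists.mp hle
  obtain ⟨n, hn, hnp⟩ := exists_pow_notMem_and_pow_mem h.isPGroup hky
  obtain ⟨hp2, hQ⟩ := h.quaternionRelations hc hco hy (pow_mem hk n) hnp hn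
  exact ⟨hp2, k ^ n, pow_mem hk n, y, hy, hQ⟩

theorem false (h : NoncyclicRegularPair p H M) : False := by
  obtain ⟨c, -, hc, hco⟩ := h.exists_mem_center_orderOf_eq
  obtain ⟨rfl, k, hk, y, hy, hQ⟩ := h.exists_quaternionRelations hc hco
  by_cases hyN : y ∈ baerNorm P
  · have hHS : H ≤ baerNorm P ⊓ M := le_inf h.isRegularPoint.le_baerNorm h.le
    have hyS : y ∉ baerNorm P ⊓ M := fun hyS => hy hyS.2
    by_cases hkM : k ∈ M
    · exact h.not_quaternionRelations hc hco hHS inf_le_left ⟨hk, hkM⟩ hy hyS hQ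
    · have hykM : y * k ∈ M := by simp [mul_mem_iff_of_index_two h.index_eq, hy, hkM]
      exact h.not_quaternionRelations hc hco hHS inf_le_left ⟨mul_mem hyN hk, hykM⟩ hy hyS
        hQ.mul_left
  · exact h.not_quaternionRelations hc hco h.isRegularPoint.le_baerNorm le_rfl hk hy hyN hQ

end NoncyclicRegularPair

theorem IsRegularPoint.isCyclic_of_isPGroup {p : ℕ} [Fact p.Prime] {P : Type*} [Group P] [Finite P]
    {H : Subgroup P} (hH : IsRegularPoint H) (hP : IsPGroup p P) : IsCyclic P := by
  by_contra hcyc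
  have : Nontrivial P := not_subsingleton_iff_nontrivial.mp fun _ => hcyc isCyclic_of_subsingleton
  obtain ⟨K, hK, hKtop⟩ : ∃ K : Subgroup P, IsRegularPoint K ∧ K ≠ ⊤ := by
    rcases eq_or_ne H ⊤ with rfl | hHtop
    · exact ⟨⊥, hH.of_top ⊥, bot_ne_top⟩
    · exact ⟨H, hH, hHtop⟩
  obtain ⟨M, hKM, hM⟩ := exists_le_index_eq_prime hP hKtop
  exact NoncyclicRegularPair.false ⟨hP, hcyc, hK, hM, hKM⟩

theorem isPGroup_pi {p : ℕ} [Fact p.Prime] {ι : Type*} [Finite ι] {A : ι → Type*}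
    [∀ i, Group (A i)] [∀ i, Finite (A i)] (hA : ∀ i, IsPGroup p (A i)) :
    IsPGroup p (∀ i, A i) := by
  have := Fintype.ofFinite ι
  choose n hn using fun i => IsPGroup.iff_card.mp (hA i)
  refine IsPGroup.of_card (n := ∑ i, n i) ?_
  rw [Nat.card_pi, ← Finset.prod_pow_eq_pow_sum]
  exact Finset.prod_congr rfl fun i _ => hn i

namespace IsRegularPoint

variable {G : Type*} [Group G] [Finite G] {H : Subgroup G}

theorem isCyclic_sylow (hH : IsRegularPoint H) {p : ℕ} [hp : Fact p.Prime] (P : Sylow p G) :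
    IsCyclic P := by
  classical
  by_cases hpG : p ∣ Nat.card G
  · obtain ⟨φ⟩ := (Group.isNilpotent_of_finite_tfae.out 0 4).mp hH.isNilpotent
    have hfact (q : (Nat.card G).primeFactors) : Fact q.1.Prime :=
      ⟨Nat.prime_of_mem_primeFactors q.2⟩
    have hpGroup (q : (Nat.card G).primeFactors) : IsPGroup q.1 (∀ Q : Sylow q.1 G, Q) :=
      isPGroup_pi fun Q => Q.isPGroup'
    have hcoprime : Pairwise fun q r : (Nat.card G).primeFactors =>
        (Nat.card (∀ Q : Sylow q.1 G, Q)).Coprime (Nat.card (∀ Q : Sylow r.1 G, Q)) := by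
      intro q r hqr
      obtain ⟨m, hm⟩ := IsPGroup.iff_card.mp (hpGroup q)
      obtain ⟨n, hn⟩ := IsPGroup.iff_card.mp (hpGroup r)
      rw [hm, hn]
      exact Nat.coprime_pow_primes m n (hfact q).out (hfact r).out (Subtype.coe_injective.ne hqr)
    let q : (Nat.card G).primeFactors :=
      ⟨p, Nat.mem_primeFactors.mpr ⟨hp.out, hpG, Nat.card_pos.ne'⟩⟩
    have hcyc := ((hH.map_mulEquiv φ.symm).map_eval hcoprime q).isCyclic_of_isPGroup (hpGroup q)
    exact isCyclic_of_surjective (Pi.evalMonoidHom (fun Q : Sylow p G => Q) P)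
      (Function.surjective_eval P)
  · have hcard : Nat.card P = 1 := P.isPGroup'.card_eq_or_dvd.resolve_right fun hpP =>
      hpG (hpP.trans (card_subgroup_dvd_card _))
    have : Subsingleton P := (Nat.card_eq_one_iff_unique.mp hcard).1
    exact isCyclic_of_subsingleton

theorem isCyclic (hH : IsRegularPoint H) : IsCyclic G := by
  have := hH.isNilpotent
  have : IsZGroup G := ⟨fun _ hp P => hH.isCyclic_sylow (hp := ⟨hp⟩) P⟩
  infer_instance

end IsRegularPoint

theorem map_eq_self_of_isCyclic {G : Type*} [Group G] [Finite G] [IsCyclic G]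
    (α : MulAut G) (L : Subgroup G) : L.map α.toMonoidHom = L := by
  obtain ⟨m, hm⟩ := MonoidHom.map_cyclic α.toMonoidHom
  exact map_eq_self_of_forall_mem fun x hx => hm x ▸ zpow_mem hx m

/-- For a finite group `R`, the natural action of `Aut(R)` on the set of subgroups
of `R` has a point (a subgroup `H`) whose stabilizer equals the kernel of the action
(the power automorphisms, i.e. the automorphisms fixing every subgroup setwise) --
equivalently, the induced permutation group has a regular orbit -- if and only if
`R` is cyclic. -/
theorem stmt1 (R : Type*) [Group R] [Finite R] :
    (∃ H : Subgroup R, ∀ α : MulAut R,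
      Subgroup.map α.toMonoidHom H = H ↔ ∀ K : Subgroup R, Subgroup.map α.toMonoidHom K = K) ↔
    IsCyclic R := by
  constructor
  · rintro ⟨H, hH⟩
    exact IsRegularPoint.isCyclic fun α => (hH α).mp
  · intro _
    have hmap (α : MulAut R) (K : Subgroup R) : K.map α.toMonoidHom = K :=
      map_eq_self_of_isCyclic α K
    exact ⟨⊥, fun α => iff_of_true (hmap α ⊥) (hmap α)⟩
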